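/- Let F be a field of characteristic different from 2, let Φ ∈ M_n(F) be symmetric and invertible, and let σ be the involution on M_n(F) given by σ(X) = ΦXᵀΦ⁻¹. Let b_1, ..., b_t ∈ F be nonzero and let Y be the set of field orderings P of F with b_1 >_P 0, ..., b_t >_P 0. Let a ∈ M_n(F) be invertible with σ(a) = a and such that Φ⁻¹a is positive definite at every P ∈ Y. Then for every (not necessarily invertible) u ∈ M_n(F) with σ(u) = u, the following are equivalent: (i) Φ⁻¹u is positive semidefinite at every P ∈ Y; (ii) there exists for each e ∈ {0,1}^t a finite list of matrices X_{e,1}, ..., X_{e,N} ∈ M_n(F) such that u = Σ_{e ∈ {0,1}^t} b_1^{e_1}···b_t^{e_t} · Σ_{i=1}^{N} σ(X_{e,i}) a X_{e,i}. -/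

import Mathlib

open Matrix BigOperators

/-- A field ordering of `F`, given by its cone of nonnegative elements.
This is equivalent to a linear order making `F` a linearly ordered field. -/
structure FieldOrdering (F : Type*) [Field F] where
  nonneg : F → Prop
  add_nonneg : ∀ {x y : F}, nonneg x → nonneg y → nonneg (x + y)
  mul_nonneg : ∀ {x y : F}, nonneg x → nonneg y → nonneg (x * y)
  total : ∀ x : F, nonneg x ∨ nonneg (-x)
  eq_zero_of : ∀ {x : F}, nonneg x → nonneg (-x) → x = 0

/-- `x >_P 0`. -/
def FieldOrdering.pos {F : Type*} [Field F] (P : FieldOrdering F) (x : F) : Prop :=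
  P.nonneg x ∧ x ≠ 0

/-- A matrix is positive semidefinite at an ordering `P` if `xᵀMx ≥_P 0` for all `x`. -/
def Matrix.IsPSDAt {F : Type*} [Field F] {n : ℕ} (P : FieldOrdering F)
    (M : Matrix (Fin n) (Fin n) F) : Prop :=
  ∀ x : Fin n → F, P.nonneg (x ⬝ᵥ (M *ᵥ x))

/-- A matrix is positive definite at an ordering `P` if `xᵀMx >_P 0` for all `x ≠ 0`. -/
def Matrix.IsPDAt {F : Type*} [Field F] {n : ℕ} (P : FieldOrdering F)
    (M : Matrix (Fin n) (Fin n) F) : Prop :=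
  ∀ x : Fin n → F, x ≠ 0 → P.pos (x ⬝ᵥ (M *ᵥ x))


theorem art_neg_one {F : Type*} [Field F] (hF : (2 : F) ≠ 0) (Q : Subsemiring F)
    (hsq : ∀ x : F, x * x ∈ Q) (d : F) (hd : d ∉ Q) : (-1 : F) ∉ Q := by
  intro h
  apply hd
  have e : d = ((d + 1) / 2) * ((d + 1) / 2) + (-1) * (((d - 1) / 2) * ((d - 1) / 2)) := by
    field_simp; ring
  rw [e]
  exact Q.add_mem (hsq _) (Q.mul_mem h (hsq _))

theorem art_zero {F : Type*} [Field F] (Q : Subsemiring F)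
    (hsq : ∀ x : F, x * x ∈ Q) (h1 : (-1 : F) ∉ Q) {x : F} (hx : x ∈ Q) (hx' : -x ∈ Q) :
    x = 0 := by
  by_contra h0
  apply h1
  have e : (-1 : F) = x * (-x) * (x⁻¹ * x⁻¹) := by field_simp
  rw [e]
  exact Q.mul_mem (Q.mul_mem hx hx') (hsq _)

/-- The set `Q + xQ`. -/
def artExt {F : Type*} [Field F] (Q : Subsemiring F) (hsq : ∀ x : F, x * x ∈ Q) (x : F) :
    Subsemiring F where
  carrier := {y | ∃ p ∈ Q, ∃ q ∈ Q, y = p + x * q}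
  mul_mem' := by
    rintro _ _ ⟨p, hp, q, hq, rfl⟩ ⟨r, hr, s, hs, rfl⟩
    refine ⟨p * r + (x * x) * (q * s), Q.add_mem (Q.mul_mem hp hr)
      (Q.mul_mem (hsq x) (Q.mul_mem hq hs)), p * s + q * r,
      Q.add_mem (Q.mul_mem hp hs) (Q.mul_mem hq hr), by ring⟩
  one_mem' := ⟨1, Q.one_mem, 0, Q.zero_mem, by ring⟩
  add_mem' := by
    rintro _ _ ⟨p, hp, q, hq, rfl⟩ ⟨r, hr, s, hs, rfl⟩
    exact ⟨p + r, Q.add_mem hp hr, q + s, Q.add_mem hq hs, by ring⟩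
  zero_mem' := ⟨0, Q.zero_mem, 0, Q.zero_mem, by ring⟩

theorem art_mem {F : Type*} [Field F] (hF : (2 : F) ≠ 0) (T : Subsemiring F)
    (hsq : ∀ x : F, x * x ∈ T) (d : F)
    (h : ∀ P : FieldOrdering F, (∀ x ∈ T, P.nonneg x) → P.nonneg d) : d ∈ T := by
  by_contra hd
  obtain ⟨Q, hTQ, hQ⟩ := zorn_le_nonempty₀ {Q : Subsemiring F | T ≤ Q ∧ d ∉ Q} (by
    intro c hc hchain y hy
    refine ⟨sSup c, ⟨(hc hy).1.trans (le_sSup hy), ?_⟩, fun z hz => le_sSup hz⟩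
    rw [Subsemiring.mem_sSup_of_directedOn ⟨y, hy⟩ hchain.directedOn]
    rintro ⟨s, hs, hds⟩
    exact (hc hs).2 hds) T ⟨le_rfl, hd⟩
  have hdQ : d ∉ Q := hQ.prop.2
  have hsQ : ∀ x : F, x * x ∈ Q := fun x => hTQ (hsq x)
  have h1 := art_neg_one hF Q hsQ d hdQ
  have key : ∀ x, x ∉ Q → ∃ p ∈ Q, ∃ q ∈ Q, d = p + x * q := by
    intro x hx
    by_contra hne
    have hle : Q ≤ artExt Q hsQ x := fun y hy => ⟨y, hy, 0, Q.zero_mem, by ring⟩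
    have := hQ.le_of_ge (y := artExt Q hsQ x) ⟨hTQ.trans hle, hne⟩ hle
    exact hx (this ⟨0, Q.zero_mem, 1, Q.one_mem, by ring⟩)
  have tot : ∀ x, x ∈ Q ∨ -x ∈ Q := by
    intro x
    by_contra hx
    push Not at hx
    obtain ⟨p, hp, q, hq, e1⟩ := key x hx.1
    obtain ⟨r, hr, s, hs, e2⟩ := key (-x) hx.2
    have hm : d * d + p * r + (x * x) * (q * s) ∈ Q :=
      Q.add_mem (Q.add_mem (hsQ d) (Q.mul_mem hp hr)) (Q.mul_mem (hsQ x) (Q.mul_mem hq hs))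
    have e3 : d * d + p * r + (x * x) * (q * s) = d * (p + r) := by
      have : (d - p) * (d - r) = (x * q) * (-x * s) := by
        rw [show d - p = x * q by rw [e1]; ring, show d - r = -x * s by rw [e2]; ring]
      linear_combination this
    by_cases h0 : p + r = 0
    · have hrp : r = -p := by linear_combination h0
      have hp0 : p = 0 := art_zero Q hsQ h1 hp (hrp ▸ hr)
      subst hp0
      have hr0 : r = 0 := by simpa using hrp
      subst hr0
      have hd0 : d * d = 0 := by
        apply art_zero Q hsQ h1 (hsQ d)
        have : -(d * d) = (x * x) * (q * s) := by linear_combination -e3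
        rw [this]
        exact Q.mul_mem (hsQ x) (Q.mul_mem hq hs)
      apply hdQ
      rw [mul_self_eq_zero.mp hd0]
      exact Q.zero_mem
    · apply hdQ
      have : d = (d * (p + r)) * (p + r) * ((p + r)⁻¹ * (p + r)⁻¹) := by field_simp
      rw [this, ← e3]
      exact Q.mul_mem (Q.mul_mem hm (Q.add_mem hp hr)) (hsQ _)
  exact hdQ (h ⟨fun x => x ∈ Q, fun hx hy => Q.add_mem hx hy, fun hx hy => Q.mul_mem hx hy,
    tot, fun hx hy => art_zero Q hsQ h1 hx hy⟩ (fun x hx => hTQ hx))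

theorem FieldOrdering.sq_nonneg' {F : Type*} [Field F] (P : FieldOrdering F) (x : F) :
    P.nonneg (x * x) := by
  rcases P.total x with h | h
  · exact P.mul_nonneg h h
  · have := P.mul_nonneg h h
    rwa [neg_mul_neg] at this

theorem FieldOrdering.zero_nonneg {F : Type*} [Field F] (P : FieldOrdering F) :
    P.nonneg 0 := by simpa using P.sq_nonneg' 0

theorem FieldOrdering.one_nonneg {F : Type*} [Field F] (P : FieldOrdering F) :
    P.nonneg 1 := by simpa using P.sq_nonneg' 1

theorem FieldOrdering.sum_nonneg {F : Type*} [Field F] (P : FieldOrdering F) {ι : Type*}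
    (s : Finset ι) (f : ι → F) (h : ∀ i ∈ s, P.nonneg (f i)) : P.nonneg (∑ i ∈ s, f i) :=
  Finset.sum_induction f P.nonneg (fun _ _ => P.add_nonneg) P.zero_nonneg h

theorem FieldOrdering.prod_nonneg {F : Type*} [Field F] (P : FieldOrdering F) {ι : Type*}
    (s : Finset ι) (f : ι → F) (h : ∀ i ∈ s, P.nonneg (f i)) : P.nonneg (∏ i ∈ s, f i) :=
  Finset.prod_induction f P.nonneg (fun _ _ => P.mul_nonneg) P.one_nonneg h

theorem sym_diag {F : Type*} [Field F] (hF : (2 : F) ≠ 0) {n : ℕ}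
    (S : Matrix (Fin n) (Fin n) F) (hS : Sᵀ = S) :
    ∃ (v z : Fin n → Fin n → F),
      S = ∑ i, (v i ⬝ᵥ (S *ᵥ v i)) • vecMulVec (z i) (z i) := by
  have : Invertible (2 : F) := invertibleOfNonzero hF
  let B : LinearMap.BilinForm F (Fin n → F) := Matrix.toBilin' S
  have hB : ∀ x y, B x y = x ⬝ᵥ (S *ᵥ y) := fun x y => Matrix.toBilin'_apply' S x y
  have hsymm : LinearMap.IsSymm B := ⟨fun x y => by
    rw [RingHom.id_apply, hB, hB, dotProduct_mulVec, ← mulVec_transpose, hS, dotProduct_comm]⟩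
  obtain ⟨w, hw⟩ := LinearMap.BilinForm.exists_orthogonal_basis (B := B) hsymm
  have hfr : Module.finrank F (Fin n → F) = n := by simp
  let v : Module.Basis (Fin n) F (Fin n → F) := w.reindex (finCongr hfr)
  have hv : ∀ i j, i ≠ j → B (v i) (v j) = 0 := by
    intro i j hij
    simp only [v, Module.Basis.reindex_apply]
    exact hw (fun h => hij (by simpa using h))
  refine ⟨fun i => v i, fun i j => v.repr (Pi.single j 1) i, ?_⟩
  ext j k
  have e1 : S j k = B (Pi.single j 1) (Pi.single k 1) := by
    simp [hB]
  rw [e1]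
  conv_lhs => rw [← v.sum_repr (Pi.single j 1), ← v.sum_repr (Pi.single k 1)]
  simp only [map_sum, map_smul, LinearMap.sum_apply, LinearMap.smul_apply, smul_eq_mul,
    Matrix.sum_apply, Matrix.smul_apply, vecMulVec_apply]
  refine Finset.sum_congr rfl fun i _ => ?_
  rw [Finset.sum_eq_single i]
  · rw [hB]; ring
  · intro l _ hl
    first | rw [hv i l (Ne.symm hl)] | rw [hv l i hl]
    ring
  · simp

/-- The product `b^e`. -/
def bpow {F : Type*} [Field F] {t : ℕ} (b : Fin t → F) (e : Fin t → Bool) : F :=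
  ∏ j, if e j then b j else 1

theorem bpow_mul {F : Type*} [Field F] {t : ℕ} (b : Fin t → F) (e : Fin t → Bool) (j : Fin t) :
    ∃ (e' : Fin t → Bool) (c : F), b j * bpow b e = c * c * bpow b e' := by
  classical
  have hsplit : ∀ e : Fin t → Bool, bpow b e =
      (if e j then b j else 1) * ∏ k ∈ Finset.univ.erase j, if e k then b k else 1 := fun e =>
    (Finset.mul_prod_erase Finset.univ (fun k => if e k then b k else 1)
      (Finset.mem_univ j)).symm
  have hrest : ∀ x, (∏ k ∈ Finset.univ.erase j, if Function.update e j x k then b k else 1)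
      = ∏ k ∈ Finset.univ.erase j, if e k then b k else 1 := fun x =>
    Finset.prod_congr rfl fun k hk => by
      rw [Function.update_of_ne (Finset.ne_of_mem_erase hk)]
  cases h : e j
  · refine ⟨Function.update e j true, 1, ?_⟩
    rw [hsplit, hsplit (Function.update e j true), hrest]
    simp [h]
  · refine ⟨Function.update e j false, b j, ?_⟩
    rw [hsplit, hsplit (Function.update e j false), hrest]
    simp [h, mul_assoc]

/-- The cone of weighted sums. -/
def wcone {F : Type*} [Field F] {n t : ℕ} (b : Fin t → F) (A : Matrix (Fin n) (Fin n) F) :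
    AddSubmonoid (Matrix (Fin n) (Fin n) F) :=
  AddSubmonoid.closure {M | ∃ e X, M = bpow b e • (Xᵀ * A * X)}

theorem wcone_smul {F : Type*} [Field F] {n t : ℕ} (b : Fin t → F)
    (A : Matrix (Fin n) (Fin n) F) (s : F)
    (hs : s ∈ Subsemiring.closure (Set.range b ∪ {y | ∃ x, y = x * x})) :
    ∀ M ∈ wcone b A, s • M ∈ wcone b A := by
  have sqm : ∀ c : F, ∀ M ∈ wcone b A, (c * c) • M ∈ wcone b A := by
    intro c M hM
    induction hM using AddSubmonoid.closure_induction with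
    | mem M h =>
      obtain ⟨e, X, rfl⟩ := h
      apply AddSubmonoid.subset_closure
      refine ⟨e, c • X, ?_⟩
      simp only [transpose_smul, Matrix.smul_mul, Matrix.mul_smul, smul_smul]
      congr 1; ring
    | zero => rw [smul_zero]; exact zero_mem _
    | add M N _ _ h1 h2 => rw [smul_add]; exact add_mem h1 h2
  induction hs using Subsemiring.closure_induction with
  | mem s h =>
    rcases h with ⟨j, rfl⟩ | ⟨c, rfl⟩
    · intro M hM
      induction hM using AddSubmonoid.closure_induction with
      | mem M h =>
        obtain ⟨e, X, rfl⟩ := h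
        obtain ⟨e', c, he⟩ := bpow_mul b e j
        rw [smul_smul, he, ← smul_smul]
        exact sqm c _ (AddSubmonoid.subset_closure ⟨e', X, rfl⟩)
      | zero => rw [smul_zero]; exact zero_mem _
      | add M N _ _ h1 h2 => rw [smul_add]; exact add_mem h1 h2
    · exact sqm c
  | zero => intro M _; rw [zero_smul]; exact zero_mem _
  | one => intro M hM; rwa [one_smul]
  | add x y _ _ hx hy => intro M hM; rw [add_smul]; exact add_mem (hx M hM) (hy M hM)
  | mul x y _ _ hx hy => intro M hM; rw [← smul_smul]; exact hx _ (hy M hM)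

theorem wcone_exists {F : Type*} [Field F] {n t : ℕ} (b : Fin t → F)
    (A M : Matrix (Fin n) (Fin n) F) (hM : M ∈ wcone b A) :
    ∃ (N : ℕ) (X : (Fin t → Bool) → Fin N → Matrix (Fin n) (Fin n) F),
      M = ∑ e : Fin t → Bool, bpow b e • ∑ i, (X e i)ᵀ * A * X e i := by
  classical
  induction hM using AddSubmonoid.closure_induction with
  | mem M h =>
    obtain ⟨e, X, rfl⟩ := h
    refine ⟨1, fun e' _ => if e' = e then X else 0, ?_⟩
    rw [Finset.sum_eq_single e]
    · simp
    · intro e' _ he; simp [he]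
    · simp
  | zero => exact ⟨0, fun _ _ => 0, by simp⟩
  | add M N _ _ h1 h2 =>
    obtain ⟨N1, X1, rfl⟩ := h1
    obtain ⟨N2, X2, rfl⟩ := h2
    refine ⟨N1 + N2, fun e => Fin.append (X1 e) (X2 e), ?_⟩
    rw [← Finset.sum_add_distrib]
    refine Finset.sum_congr rfl fun e _ => ?_
    rw [← smul_add, Fin.sum_univ_add]
    simp

theorem wcone_main {F : Type*} [Field F] (hF : (2 : F) ≠ 0) {n t : ℕ} (b : Fin t → F)
    (hb : ∀ j, b j ≠ 0)
    (A S : Matrix (Fin n) (Fin n) F) (hA : Aᵀ = A) (hS : Sᵀ = S) (hAu : IsUnit A)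
    (hPD : ∀ P : FieldOrdering F, (∀ j, P.pos (b j)) → A.IsPDAt P)
    (hPSD : ∀ P : FieldOrdering F, (∀ j, P.pos (b j)) → S.IsPSDAt P) : S ∈ wcone b A := by
  set T := Subsemiring.closure (Set.range b ∪ {y | ∃ x, y = x * x}) with hT
  have hsq : ∀ x : F, x * x ∈ T := fun x => Subsemiring.subset_closure (Or.inr ⟨x, rfl⟩)
  have art : ∀ d : F, (∀ P : FieldOrdering F, (∀ j, P.pos (b j)) → P.nonneg d) → d ∈ T :=
    fun d h => art_mem hF T hsq d fun P hP => h P fun j =>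
      ⟨hP _ (Subsemiring.subset_closure (Or.inl ⟨j, rfl⟩)), hb j⟩
  rcases Nat.eq_zero_or_pos n with h0 | hn
  · subst h0
    rw [Subsingleton.elim S 0]; exact zero_mem _
  have hA0 : A ≠ 0 := by
    have : Nonempty (Fin n) := ⟨⟨0, hn⟩⟩
    exact hAu.ne_zero
  obtain ⟨x, hx⟩ : ∃ x : Fin n → F, x ⬝ᵥ (A *ᵥ x) ≠ 0 := by
    by_contra hne
    push Not at hne
    obtain ⟨v, z, h⟩ := sym_diag hF A hA
    apply hA0
    rw [h]
    simp [hne]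
  set c := x ⬝ᵥ (A *ᵥ x) with hc
  have hx0 : x ≠ 0 := by
    rintro rfl
    simp at hc
    exact hx hc
  have hcT : c ∈ T := art c fun P hP => (hPD P hP x hx0).1
  have hciT : c⁻¹ ∈ T := by
    rw [show c⁻¹ = c * (c⁻¹ * c⁻¹) by field_simp]
    exact T.mul_mem hcT (hsq _)
  obtain ⟨v, z, h⟩ := sym_diag hF S hS
  rw [h]
  refine sum_mem fun i _ => ?_
  have hd : v i ⬝ᵥ (S *ᵥ v i) ∈ T := art _ fun P hP => hPSD P hP _
  have hz : c • vecMulVec (z i) (z i) ∈ wcone b A := by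
    apply AddSubmonoid.subset_closure
    refine ⟨fun _ => false, vecMulVec x (z i), ?_⟩
    rw [transpose_vecMulVec, vecMulVec_mul, vecMulVec_mul_vecMulVec, ← dotProduct_mulVec, ← hc]
    simp [bpow, vecMulVec_smul]
  have := wcone_smul b A _ (T.mul_mem hd hciT) _ hz
  rwa [smul_smul, mul_assoc, inv_mul_cancel₀ hx, mul_one] at this

theorem psd_of_sum {F : Type*} [Field F] {n t N : ℕ} (b : Fin t → F)
    (A : Matrix (Fin n) (Fin n) F)
    (X : (Fin t → Bool) → Fin N → Matrix (Fin n) (Fin n) F)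
    (P : FieldOrdering F) (hP : ∀ j, P.pos (b j)) (hA : A.IsPDAt P) :
    (∑ e : Fin t → Bool, bpow b e • ∑ i, (X e i)ᵀ * A * X e i).IsPSDAt P := by
  intro x
  rw [Matrix.sum_mulVec, dotProduct_sum]
  refine P.sum_nonneg _ _ fun e _ => ?_
  rw [smul_mulVec, dotProduct_smul, Matrix.sum_mulVec, dotProduct_sum, smul_eq_mul]
  refine P.mul_nonneg (P.prod_nonneg _ _ fun j _ => ?_) (P.sum_nonneg _ _ fun i _ => ?_)
  · split_ifs
    · exact (hP j).1
    · exact P.one_nonneg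
  · rw [← mulVec_mulVec, ← mulVec_mulVec, dotProduct_mulVec, vecMul_transpose]
    by_cases h : X e i *ᵥ x = 0
    · rw [h]; simpa using P.zero_nonneg
    · exact (hA _ h).1

/-- General (possibly singular) case of the main theorem, split orthogonal case: for
`σ = ad_Φ` and an invertible σ-symmetric `a` with `Φ⁻¹a` positive definite on
`Y = H(b₁,…,b_t)`, a σ-symmetric `u` has `Φ⁻¹u` positive semidefinite at all `P ∈ Y`
iff `u` is a weighted sum of elements `σ(X) a X` with weights `b₁^{e₁} ⋯ b_t^{e_t}`. -/
theorem stmt_3 {F : Type*} [Field F] (hF : (2 : F) ≠ 0) {n : ℕ}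
    (Φ : Matrix (Fin n) (Fin n) F) (hΦsym : Φᵀ = Φ) (hΦ : IsUnit Φ.det)
    {t : ℕ} (b : Fin t → F) (hb : ∀ j, b j ≠ 0)
    (a : Matrix (Fin n) (Fin n) F) (ha : IsUnit a) (haσ : Φ * aᵀ * Φ⁻¹ = a)
    (hamax : ∀ P : FieldOrdering F, (∀ j, P.pos (b j)) → (Φ⁻¹ * a).IsPDAt P)
    (u : Matrix (Fin n) (Fin n) F) (huσ : Φ * uᵀ * Φ⁻¹ = u) :
    (∀ P : FieldOrdering F, (∀ j, P.pos (b j)) → (Φ⁻¹ * u).IsPSDAt P) ↔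
      ∃ (N : ℕ) (X : (Fin t → Bool) → Fin N → Matrix (Fin n) (Fin n) F),
        u = ∑ e : Fin t → Bool,
          (∏ j, if e j then b j else 1) •
            ∑ i, (Φ * (X e i)ᵀ * Φ⁻¹) * a * X e i := by
  have hinv : Φ⁻¹ * Φ = 1 := Matrix.nonsing_inv_mul Φ hΦ
  have hinv' : Φ * Φ⁻¹ = 1 := Matrix.mul_nonsing_inv Φ hΦ
  have symm_of : ∀ w : Matrix (Fin n) (Fin n) F, Φ * wᵀ * Φ⁻¹ = w → (Φ⁻¹ * w)ᵀ = Φ⁻¹ * w := by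
    intro w hw
    rw [transpose_mul, transpose_nonsing_inv, hΦsym]
    conv_rhs => rw [← hw]
    rw [← mul_assoc, ← mul_assoc, hinv, one_mul]
  have term : ∀ (N : ℕ) (X : (Fin t → Bool) → Fin N → Matrix (Fin n) (Fin n) F),
      ∑ e : Fin t → Bool, (∏ j, if e j then b j else 1) •
            ∑ i, (Φ * (X e i)ᵀ * Φ⁻¹) * a * X e i =
      Φ * ∑ e : Fin t → Bool, bpow b e • ∑ i, (X e i)ᵀ * (Φ⁻¹ * a) * X e i := by
    intro N X
    simp only [Finset.mul_sum, Matrix.mul_smul, bpow, mul_assoc]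
  constructor
  · intro h
    have hAu : IsUnit (Φ⁻¹ * a) := by
      refine IsUnit.mul ?_ ha
      exact IsUnit.of_mul_eq_one Φ hinv
    obtain ⟨N, X, hX⟩ := wcone_exists b (Φ⁻¹ * a) (Φ⁻¹ * u)
      (wcone_main hF b hb _ _ (symm_of a haσ) (symm_of u huσ) hAu hamax h)
    refine ⟨N, X, ?_⟩
    rw [term, ← hX, ← mul_assoc, hinv', one_mul]
  · rintro ⟨N, X, hX⟩ P hP
    rw [hX, term, ← mul_assoc, hinv, one_mul]
    exact psd_of_sum b _ X P hP (hamax P hP)
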